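/- arXiv:2505.18626 — 2 statements merged into one kernel-verified Lean document; each statement's English description precedes it below -/
import Mathlib

section
/- For every regular ω-language F ⊆ X^ω, the value μ₌(F) of the equidistribution (uniform product) measure on F is a rational number. -/
open Set MeasureTheory Computability

namespace AutoBaire

/-- The Cantor topology on the space of ω-words over `X`:
the product of the discrete topology on `X`. -/
def cantorTop (X : Type) : TopologicalSpace (ℕ → X) :=
  @Pi.topologicalSpace ℕ (fun _ => X) (fun _ => ⊥)

/-- The Borel σ-algebra of the Cantor space. -/
def cantorBorel (X : Type) : MeasurableSpace (ℕ → X) :=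
  @borel (ℕ → X) (cantorTop X)

variable {X : Type}

/-- Concatenation `w·ξ` of a finite word with an ω-word. -/
def wcat (w : List X) (ξ : ℕ → X) : ℕ → X :=
  Stream'.appendStream' w ξ

/-- The ball (cylinder) `w·X^ω`. -/
def cyl (w : List X) : Set (ℕ → X) := {ξ | ∃ η : ℕ → X, ξ = wcat w η}

/-- The ω-language `W·A` for a language `W` and an ω-language `A`. -/
def catOmega (W : Language X) (A : Set (ℕ → X)) : Set (ℕ → X) :=
  {ξ | ∃ w ∈ W, ∃ η ∈ A, ξ = wcat w η}

/-- `V^ω`: the set of ω-words that are infinite concatenations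
`v₁·v₂·⋯` of non-empty words `vᵢ ∈ V`. -/
def omegaPow (V : Language X) : Set (ℕ → X) :=
  {ξ | ∃ f : ℕ → List X, (∀ i, f i ∈ V ∧ f i ≠ []) ∧
    ∀ k, ξ ∈ cyl (((List.range k).map f).flatten)}

/-- Regular languages: those obtained from finite languages via the operations
union, concatenation and star. -/
inductive IsRegLang : Language X → Prop
  | finite (W : Language X) : (W : Set (List X)).Finite → IsRegLang W
  | union (W V : Language X) : IsRegLang W → IsRegLang V → IsRegLang (W + V)
  | concat (W V : Language X) : IsRegLang W → IsRegLang V → IsRegLang (W * V)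
  | star (W : Language X) : IsRegLang W → IsRegLang (W∗)

/-- Regular ω-languages: finite unions `⋃ᵢ Wᵢ·Vᵢ^ω` with `Wᵢ, Vᵢ` regular. -/
def IsRegOmega (F : Set (ℕ → X)) : Prop :=
  ∃ (n : ℕ) (W V : Fin n → Language X),
    (∀ i, IsRegLang (W i) ∧ IsRegLang (V i)) ∧
    F = ⋃ i, catOmega (W i) (omegaPow (V i))

/-- `X*·w·X^ω`: the set of ω-words containing `w` as an infix. -/
def infixOcc (w : List X) : Set (ℕ → X) :=
  {ξ | ∃ u : List X, ξ ∈ cyl (u ++ w)}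

/-- An ω-word is disjunctive if every finite word occurs in it as an infix. -/
def Disjunctive (ξ : ℕ → X) : Prop := ∀ w : List X, ξ ∈ infixOcc w

/-- Ultimately periodic ω-words: `ξ = w·v·v·v·⋯` with `v ≠ e`. -/
def UltPeriodic (ξ : ℕ → X) : Prop :=
  ∃ (w v : List X) (h : v ≠ []), ξ = wcat w (Stream'.cycle v h)

/-- The Automatic Baire property: `F Δ E ⊆ F'` for some regular open
ω-language `E` and some regular ω-language `F'` of first Baire category. -/
def HasABP (F : Set (ℕ → X)) : Prop :=
  ∃ E F' : Set (ℕ → X),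
    IsRegOmega E ∧ @IsOpen _ (cantorTop X) E ∧
    IsRegOmega F' ∧ @IsMeagre _ (cantorTop X) F' ∧
    symmDiff F E ⊆ F'

/-- The measure is finite and non-null: `0 < μ(X^ω) < ∞`. -/
def FiniteNonNull (μ : @MeasureTheory.Measure (ℕ → X) (cantorBorel X)) : Prop :=
  0 < μ Set.univ ∧ μ Set.univ < ⊤

/-- `supp(μ) = X^ω`: every non-empty open set has positive measure. -/
def FullSupport (μ : @MeasureTheory.Measure (ℕ → X) (cantorBorel X)) : Prop :=
  ∀ U : Set (ℕ → X), @IsOpen _ (cantorTop X) U → U.Nonempty → 0 < μ U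

/-- The balance condition: there is `c > 0` such that for all `w ∈ X*`, `x ∈ X`
either `μ(wx·X^ω) = 0` or `c·μ(w·X^ω) ≤ μ(wx·X^ω)`. -/
def Balanced (μ : @MeasureTheory.Measure (ℕ → X) (cantorBorel X)) : Prop :=
  ∃ c : ENNReal, 0 < c ∧ ∀ (w : List X) (x : X),
    μ (cyl (w ++ [x])) = 0 ∨ c * μ (cyl w) ≤ μ (cyl (w ++ [x]))



/-! Regular languages have finitely many left quotients. -/

theorem fin_finite (W : Language X) (h : (W : Set (List X)).Finite) :
    (Set.range W.leftQuotient).Finite := by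
  have h2 : (⋃ w ∈ (W : Set (List X)), {y : List X | y ∈ w.tails}).Finite :=
    h.biUnion (fun w _ => w.tails.finite_toSet)
  refine (h2.finite_subsets).subset ?_
  rintro _ ⟨u, rfl⟩
  intro y hy
  simp only [Set.mem_iUnion]
  refine ⟨u ++ y, hy, ?_⟩
  simp

theorem fin_union (W V : Language X) (hW : (Set.range W.leftQuotient).Finite)
    (hV : (Set.range V.leftQuotient).Finite) : (Set.range (W + V).leftQuotient).Finite := by
  refine (Set.Finite.image2 (fun A B : Language X => A + B) hW hV).subset ?_
  rintro _ ⟨u, rfl⟩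
  exact ⟨_, ⟨u, rfl⟩, _, ⟨u, rfl⟩, rfl⟩

theorem fin_concat (W V : Language X) (hW : (Set.range W.leftQuotient).Finite)
    (hV : (Set.range V.leftQuotient).Finite) : (Set.range (W * V).leftQuotient).Finite := by
  refine (Set.Finite.image2 (fun (A : Language X) (S : Set (Language X)) =>
    ({y | y ∈ A * V ∨ ∃ B ∈ S, y ∈ B} : Language X)) hW hV.finite_subsets).subset ?_
  rintro _ ⟨u, rfl⟩
  refine ⟨_, ⟨u, rfl⟩, {B | ∃ u1 u2, u1 ∈ W ∧ u = u1 ++ u2 ∧ B = V.leftQuotient u2}, ?_, ?_⟩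
  · rintro _ ⟨u1, u2, _, _, rfl⟩
    exact ⟨u2, rfl⟩
  · ext y
    constructor
    · rintro (h | ⟨B, ⟨u1, u2, h1, rfl, rfl⟩, hy⟩)
      · obtain ⟨a, ha, b, hb, rfl⟩ := Language.mem_mul.1 h
        exact Language.mem_mul.2 ⟨u ++ a, ha, b, hb, by simp⟩
      · exact Language.mem_mul.2 ⟨u1, h1, u2 ++ y, hy, by simp⟩
    · intro h
      obtain ⟨a, ha, b, hb, hab⟩ := Language.mem_mul.1 h
      rcases List.append_eq_append_iff.1 hab with ⟨c, rfl, rfl⟩ | ⟨c, rfl, rfl⟩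
      · exact Or.inr ⟨_, ⟨a, c, ha, rfl, rfl⟩, hb⟩
      · exact Or.inl (Language.mem_mul.2 ⟨c, ha, b, hb, rfl⟩)

theorem star_aux (W : Language X) (y : List X) (L : List (List X)) : ∀ (u : List X), u ≠ [] →
    (∀ a ∈ L, a ∈ W) → L.flatten = u ++ y →
    ∃ u1 u2, u1 ∈ W∗ ∧ u = u1 ++ u2 ∧ y ∈ W.leftQuotient u2 * W∗ := by
  induction L with
  | nil => intro u hu _ h; simp at h; exact absurd h.1 hu
  | cons a L ih =>
    intro u hu hL h
    have ha : a ∈ W := hL a (by simp)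
    have hL' : ∀ b ∈ L, b ∈ W := fun b hb => hL b (by simp [hb])
    have hs : L.flatten ∈ W∗ := Language.mem_kstar.2 ⟨L, rfl, hL'⟩
    rw [List.flatten_cons] at h
    rcases List.append_eq_append_iff.1 h with ⟨c, rfl, hc⟩ | ⟨c, rfl, rfl⟩
    · by_cases h0 : c = []
      · subst h0
        refine ⟨[], a, Language.nil_mem_kstar W, by simp, ?_⟩
        refine Language.mem_mul.2 ⟨[], ?_, _, hs, by simpa using hc⟩
        simpa using ha
      · obtain ⟨u1, u2, h1, rfl, h3⟩ := ih c h0 hL' hc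
        refine ⟨a ++ u1, u2, ?_, by simp, h3⟩
        obtain ⟨L1, rfl, hL1⟩ := Language.mem_kstar.1 h1
        exact Language.mem_kstar.2 ⟨a :: L1, by simp, by simpa using ⟨ha, hL1⟩⟩
    · exact ⟨[], u, Language.nil_mem_kstar W, rfl, Language.mem_mul.2 ⟨c, ha, _, hs, rfl⟩⟩

theorem star_append {W : Language X} {u v : List X} (hu : u ∈ W∗) (hv : v ∈ W∗) :
    u ++ v ∈ W∗ := by
  obtain ⟨L1, rfl, h1⟩ := Language.mem_kstar.1 hu
  obtain ⟨L2, rfl, h2⟩ := Language.mem_kstar.1 hv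
  exact Language.mem_kstar.2 ⟨L1 ++ L2, by simp, by
    intro y hy; rcases List.mem_append.1 hy with h | h; exacts [h1 y h, h2 y h]⟩

theorem star_of {W : Language X} {u : List X} (hu : u ∈ W) : u ∈ W∗ :=
  Language.mem_kstar.2 ⟨[u], by simp, by simpa using hu⟩

theorem fin_star (W : Language X) (hW : (Set.range W.leftQuotient).Finite) :
    (Set.range (W∗).leftQuotient).Finite := by
  refine (((hW.finite_subsets).image (fun (S : Set (Language X)) =>
    ({y | ∃ B ∈ S, y ∈ B * W∗} : Language X))).insert (W∗)).subset ?_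
  rintro _ ⟨u, rfl⟩
  by_cases hu : u = []
  · left; subst hu; rfl
  right
  refine ⟨{B | ∃ u1 u2, u1 ∈ W∗ ∧ u = u1 ++ u2 ∧ B = W.leftQuotient u2}, ?_, ?_⟩
  · rintro _ ⟨u1, u2, _, _, rfl⟩
    exact ⟨u2, rfl⟩
  · ext y
    constructor
    · rintro ⟨B, ⟨u1, u2, h1, rfl, rfl⟩, hy⟩
      obtain ⟨a, ha, b, hb, rfl⟩ := Language.mem_mul.1 hy
      show (u1 ++ u2) ++ (a ++ b) ∈ (W∗)
      have := star_append h1 (star_append (star_of ha) hb)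
      simpa using this
    · intro h
      obtain ⟨L, hL, hL'⟩ := Language.mem_kstar.1 h
      obtain ⟨u1, u2, h1, h2, h3⟩ := star_aux W y L u hu hL' hL.symm
      exact ⟨_, ⟨u1, u2, h1, h2, rfl⟩, h3⟩

theorem fin_reg (W : Language X) (h : IsRegLang W) : (Set.range W.leftQuotient).Finite := by
  induction h with
  | finite W h => exact fin_finite W h
  | union W V _ _ h1 h2 => exact fin_union W V h1 h2
  | concat W V _ _ h1 h2 => exact fin_concat W V h1 h2
  | star W _ h => exact fin_star W h

/-! Words and ω-words. -/

theorem wcat_nil (ξ : ℕ → X) : wcat [] ξ = ξ := rfl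

theorem wcat_append (u v : List X) (ξ : ℕ → X) : wcat (u ++ v) ξ = wcat u (wcat v ξ) :=
  Stream'.append_append_stream u v ξ

theorem wcat_lt (w : List X) (ξ : ℕ → X) : ∀ (i : ℕ) (h : i < w.length), wcat w ξ i = w[i] := by
  induction w with
  | nil => intro i h; simp at h
  | cons a w ih =>
    intro i h
    cases i with
    | zero => rfl
    | succ i => exact ih i (by simpa using h)

theorem wcat_add (w : List X) (ξ : ℕ → X) (i : ℕ) : wcat w ξ (w.length + i) = ξ i := by
  induction w with
  | nil => simp [wcat_nil]
  | cons a w ih =>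
    have : (a :: w).length + i = (w.length + i) + 1 := by simp; omega
    rw [this]; exact ih

theorem mem_cyl (w : List X) (ξ : ℕ → X) :
    ξ ∈ cyl w ↔ ∀ (i : ℕ) (h : i < w.length), ξ i = w[i] := by
  constructor
  · rintro ⟨η, rfl⟩ i h
    exact wcat_lt w η i h
  · intro h
    refine ⟨fun i => ξ (w.length + i), ?_⟩
    funext i
    by_cases hi : i < w.length
    · rw [h i hi, wcat_lt _ _ _ hi]
    · obtain ⟨j, rfl⟩ := Nat.exists_eq_add_of_le (not_lt.1 hi)
      rw [wcat_add]

theorem wcat_inj (w : List X) : Function.Injective (wcat w) := by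
  intro ξ η h
  funext i
  rw [← wcat_add w ξ i, h, wcat_add]

theorem cyl_prefix (u v : List X) (ξ : ℕ → X) (hu : ξ ∈ cyl u) (hv : ξ ∈ cyl v)
    (hl : u.length ≤ v.length) : ∃ t, v = u ++ t := by
  rw [mem_cyl] at hu hv
  suffices u <+: v by obtain ⟨t, rfl⟩ := this; exact ⟨t, rfl⟩
  rw [List.prefix_iff_eq_take]
  apply List.ext_getElem
  · simp [hl]
  · intro i h1 h2
    rw [List.getElem_take, ← hu i h1, ← hv i (by omega)]

theorem cat_range_succ (f : ℕ → List X) (k m : ℕ) :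
    ((List.range (k + m)).map f).flatten =
      ((List.range k).map f).flatten ++ ((List.range m).map (fun i => f (k + i))).flatten := by
  rw [List.range_add]
  simp [Function.comp_def]

theorem len_flat (f : ℕ → List X) (hf : ∀ i, f i ≠ []) (k : ℕ) :
    k ≤ (((List.range k).map f).flatten).length := by
  induction k with
  | zero => simp
  | succ k ih =>
    rw [cat_range_succ, List.length_append]
    have := List.length_pos_of_ne_nil (hf k)
    simp at *
    omega

theorem flat_mem_star (V : Language X) (f : ℕ → List X) (hf : ∀ i, f i ∈ V) (k : ℕ) :
    ((List.range k).map f).flatten ∈ V∗ :=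
  Language.mem_kstar.2 ⟨_, rfl, by simp; intro a _; exact hf a⟩

theorem omega_cons (V : Language X) (v : List X) (hv : v ∈ V) (η : ℕ → X) (hη : η ∈ omegaPow V) :
    wcat v η ∈ omegaPow V := by
  by_cases h0 : v = []
  · subst h0; exact hη
  obtain ⟨f, hf, hc⟩ := hη
  refine ⟨fun i => Nat.casesOn i v f, ?_, ?_⟩
  · intro i
    cases i with
    | zero => exact ⟨hv, h0⟩
    | succ i => exact hf i
  · intro k
    cases k with
    | zero => exact ⟨wcat v η, rfl⟩
    | succ k =>
      obtain ⟨ζ, hζ⟩ := hc k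
      refine ⟨ζ, ?_⟩
      rw [add_comm, cat_range_succ, wcat_append]
      have : (fun i => (Nat.casesOn (1 + i) v f : List X)) = f := by
        funext i; rw [add_comm]
      rw [this, ← hζ]
      simp

theorem omega_star (V : Language X) (v : List X) (hv : v ∈ V∗) (η : ℕ → X) (hη : η ∈ omegaPow V) :
    wcat v η ∈ omegaPow V := by
  obtain ⟨L, rfl, hL⟩ := Language.mem_kstar.1 hv
  clear hv
  induction L with
  | nil => exact hη
  | cons a L ih =>
    rw [List.flatten_cons, wcat_append]
    exact omega_cons V a (hL a (by simp)) _ (ih (fun b hb => hL b (by simp [hb])))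

theorem omega_drop (V : Language X) (f : ℕ → List X) (hf : ∀ i, f i ∈ V ∧ f i ≠ [])
    (ξ : ℕ → X) (hc : ∀ k, ξ ∈ cyl (((List.range k).map f).flatten)) (k : ℕ) :
    ∃ η ∈ omegaPow V, ξ = wcat (((List.range k).map f).flatten) η := by
  obtain ⟨η, hη⟩ := hc k
  refine ⟨η, ⟨fun i => f (k + i), fun i => hf _, fun m => ?_⟩, hη⟩
  obtain ⟨ζ, hζ⟩ := hc (k + m)
  rw [cat_range_succ, wcat_append, hη] at hζ
  exact ⟨ζ, wcat_inj _ hζ⟩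

theorem deriv_eq (W V : Language X) (u : List X) :
    wcat u ⁻¹' (catOmega W (omegaPow V)) =
      catOmega ((W * V∗).leftQuotient u) (omegaPow V) := by
  ext ξ
  constructor
  · rintro ⟨w, hw, η, ⟨f, hf, hc⟩, h⟩
    obtain ⟨ζ, hζ, hη⟩ := omega_drop V f hf η hc u.length
    have hp := flat_mem_star V f (fun i => (hf i).1) u.length
    have hl := len_flat f (fun i => (hf i).2) u.length
    generalize ((List.range u.length).map f).flatten = p at *
    rw [hη, ← wcat_append] at h
    obtain ⟨t, ht⟩ := cyl_prefix u (w ++ p) (wcat u ξ) ⟨ξ, rfl⟩ ⟨ζ, h⟩ (by simp; omega)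
    refine ⟨t, ?_, ζ, hζ, ?_⟩
    · show u ++ t ∈ W * (V∗)
      rw [← ht]
      exact Language.mem_mul.2 ⟨w, hw, p, hp, rfl⟩
    · rw [ht, wcat_append] at h
      exact wcat_inj _ h
  · rintro ⟨t, ht, ζ, hζ, rfl⟩
    obtain ⟨w, hw, p, hp, hwp⟩ := Language.mem_mul.1 ht
    refine ⟨w, hw, wcat p ζ, omega_star V p hp ζ hζ, ?_⟩
    rw [← wcat_append, ← wcat_append, hwp]

theorem fin_omega (F : Set (ℕ → X)) (h : IsRegOmega F) :
    (Set.range (fun u : List X => wcat u ⁻¹' F)).Finite := by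
  obtain ⟨n, W, V, hr, rfl⟩ := h
  have h1 : ∀ i, (Set.range (W i * (V i)∗).leftQuotient).Finite := fun i =>
    fin_reg _ (.concat _ _ (hr i).1 (.star _ (hr i).2))
  refine ((Set.Finite.pi' h1).image
    (fun q : Fin n → Language X => ⋃ i, catOmega (q i) (omegaPow (V i)))).subset ?_
  rintro _ ⟨u, rfl⟩
  refine ⟨fun i => (W i * (V i)∗).leftQuotient u, fun i => ⟨u, rfl⟩, ?_⟩
  simp only [Set.preimage_iUnion, deriv_eq]

/-! Topology and measure. -/

section Meas

variable [TopologicalSpace X] [DiscreteTopology X]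

theorem isOpen_cyl (w : List X) : IsOpen (cyl w) := by
  have : cyl w = ⋂ i : Fin w.length, {ξ : ℕ → X | ξ i = w[i]} := by
    ext ξ
    rw [mem_cyl]
    simp only [Set.mem_iInter]
    exact ⟨fun h i => h i i.2, fun h i hi => h ⟨i, hi⟩⟩
  rw [this]
  refine isOpen_iInter_of_finite fun i => ?_
  have hc : Continuous (fun ξ : ℕ → X => ξ (i : ℕ)) := continuous_apply (i : ℕ)
  exact (isOpen_discrete ({w[i]} : Set X)).preimage hc

theorem mem_cyl_ofFn (n : ℕ) (v : Fin n → X) (ξ : ℕ → X) :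
    ξ ∈ cyl (List.ofFn v) ↔ ∀ i : Fin n, ξ i = v i := by
  rw [mem_cyl]
  constructor
  · intro h i
    simpa using h i (by simp)
  · intro h i hi
    simpa using h ⟨i, by simpa using hi⟩

theorem exists_pre (U : Set (ℕ → X)) (hU : IsOpen U) (ξ : ℕ → X) (hξ : ξ ∈ U) :
    ∃ n : ℕ, cyl (List.ofFn (fun i : Fin n => ξ i)) ⊆ U := by
  obtain ⟨I, u, hu, hs⟩ := isOpen_pi_iff.1 hU ξ hξ
  refine ⟨I.sup id + 1, fun η hη => hs ?_⟩
  rw [mem_cyl_ofFn] at hη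
  intro i hi
  have : i ≤ I.sup id := Finset.le_sup (f := id) hi
  have h2 := hη ⟨i, by omega⟩
  simp only at h2
  rw [h2]
  exact (hu i hi).2

theorem basis_cyl : TopologicalSpace.IsTopologicalBasis (Set.range (cyl (X := X))) := by
  refine TopologicalSpace.isTopologicalBasis_of_isOpen_of_nhds ?_ ?_
  · rintro _ ⟨w, rfl⟩; exact isOpen_cyl w
  · intro ξ U hξ hU
    obtain ⟨n, hn⟩ := exists_pre U hU ξ hξ
    exact ⟨_, ⟨_, rfl⟩, (mem_cyl_ofFn _ _ _).2 (fun _ => rfl), hn⟩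

theorem cyl_append_subset (u t : List X) : cyl (u ++ t) ⊆ cyl u := by
  rintro _ ⟨η, rfl⟩
  exact ⟨_, wcat_append u t η⟩

theorem pi_cyl : IsPiSystem (Set.range (cyl (X := X))) := by
  rintro _ ⟨u, rfl⟩ _ ⟨v, rfl⟩ ⟨ξ, h1, h2⟩
  rcases le_total u.length v.length with h | h
  · obtain ⟨t, rfl⟩ := cyl_prefix u v ξ h1 h2 h
    exact ⟨_, (Set.inter_eq_right.2 (cyl_append_subset u t)).symm⟩
  · obtain ⟨t, rfl⟩ := cyl_prefix v u ξ h2 h1 h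
    exact ⟨_, (Set.inter_eq_left.2 (cyl_append_subset v t)).symm⟩

theorem cont_wcat (w : List X) : Continuous (wcat w) := by
  refine continuous_pi fun i => ?_
  by_cases hi : i < w.length
  · simp only [fun ξ => wcat_lt w ξ i hi]
    exact continuous_const
  · obtain ⟨j, rfl⟩ := Nat.exists_eq_add_of_le (not_lt.1 hi)
    simp only [wcat_add]
    exact continuous_apply j

theorem image_cyl (w v : List X) : wcat w '' cyl v = cyl (w ++ v) := by
  ext ξ
  constructor
  · rintro ⟨_, ⟨η, rfl⟩, rfl⟩; exact ⟨η, (wcat_append w v η).symm⟩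
  · rintro ⟨η, rfl⟩; exact ⟨wcat v η, ⟨η, rfl⟩, (wcat_append w v η).symm⟩

theorem cyl_nil : cyl ([] : List X) = Set.univ := by
  ext ξ; simp [mem_cyl]

variable [Fintype X] [MeasurableSpace (ℕ → X)] [BorelSpace (ℕ → X)]

theorem memb_wcat (w : List X) : MeasurableEmbedding (wcat w) :=
  ((cont_wcat w).isClosedEmbedding (wcat_inj w)).measurableEmbedding

theorem scale (c : ENNReal) (μ : Measure (ℕ → X)) (hμ : ∀ w : List X, μ (cyl w) = c ^ w.length)
    (w : List X) (B : Set (ℕ → X)) : μ (wcat w '' B) = c ^ w.length * μ B := by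
  have hu : μ Set.univ = 1 := by rw [← cyl_nil, hμ]; simp
  have : IsFiniteMeasure μ := ⟨by rw [hu]; simp⟩
  have : IsFiniteMeasure (μ.comap (wcat w)) := ⟨by
    rw [(memb_wcat w).comap_apply]; exact measure_lt_top _ _⟩
  have key : μ.comap (wcat w) = c ^ w.length • μ := by
    have hcyl : ∀ s ∈ Set.range (cyl (X := X)), μ.comap (wcat w) s = (c ^ w.length • μ) s := by
      rintro _ ⟨v, rfl⟩
      rw [(memb_wcat w).comap_apply, image_cyl, hμ]
      simp [hμ, pow_add]
    refine ext_of_generate_finite (Set.range (cyl (X := X))) ?_ pi_cyl hcyl ?_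
    · rw [← basis_cyl.borel_eq_generateFrom]; exact BorelSpace.measurable_eq
    · rw [← cyl_nil]; exact hcyl _ ⟨[], rfl⟩
  rw [← (memb_wcat w).comap_apply, key]
  simp

theorem image_pre (w : List X) (A : Set (ℕ → X)) : wcat w '' (wcat w ⁻¹' A) = A ∩ cyl w := by
  rw [Set.image_preimage_eq_inter_range]
  congr 1
  ext ξ
  exact ⟨fun ⟨η, h⟩ => ⟨η, h.symm⟩, fun ⟨η, h⟩ => ⟨η, h.symm⟩⟩

theorem harmonic (c : ENNReal) (μ : Measure (ℕ → X)) (hμ : ∀ w : List X, μ (cyl w) = c ^ w.length)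
    (A : Set (ℕ → X)) : μ A = c * ∑ x : X, μ (wcat [x] ⁻¹' A) := by
  have h1 : ∀ x : X, c * μ (wcat [x] ⁻¹' A) = (μ.restrict A) (cyl [x]) := by
    intro x
    rw [Measure.restrict_apply (isOpen_cyl _).measurableSet, Set.inter_comm, ← image_pre,
      scale c μ hμ]
    simp
  rw [Finset.mul_sum, Finset.sum_congr rfl (fun x _ => h1 x), ← measure_biUnion_finset]
  · have : (⋃ x ∈ (Finset.univ : Finset X), cyl [x]) = (Set.univ : Set (ℕ → X)) := by
      ext ξ
      simp [mem_cyl]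
    rw [this, Measure.restrict_apply_univ]
  · intro x _ y _ hxy
    refine Set.disjoint_left.2 fun ξ h1 h2 => hxy ?_
    rw [mem_cyl] at h1 h2
    have e1 := h1 0 (by simp)
    have e2 := h2 0 (by simp)
    simp at e1 e2
    rw [← e1, e2]
  · intro x _; exact (isOpen_cyl _).measurableSet

theorem density (c : ENNReal) (μ : Measure (ℕ → X)) (hμ : ∀ w : List X, μ (cyl w) = c ^ w.length)
    (A : Set (ℕ → X)) (hA : μ A ≠ 0) (d : ENNReal) (hd : d < 1) :
    ∃ w : List X, d < μ (wcat w ⁻¹' A) := by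
  classical
  by_contra! hcon
  have hu : μ Set.univ = 1 := by rw [← cyl_nil, hμ]; simp
  have : IsFiniteMeasure μ := ⟨by rw [hu]; simp⟩
  have hcell : ∀ w, μ (A ∩ cyl w) ≤ d * μ (cyl w) := by
    intro w
    rw [← image_pre, scale c μ hμ, hμ, mul_comm]
    gcongr
    exact hcon w
  -- bound on open sets
  have hopen : ∀ U : Set (ℕ → X), IsOpen U → A ⊆ U → μ A ≤ d * μ U := by
    intro U hU hAU
    let P : ℕ → Set (ℕ → X) := fun n => {ξ | cyl (List.ofFn (fun i : Fin n => ξ i)) ⊆ U}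
    have hmono : Monotone (fun n => A ∩ P n) := by
      intro n m hnm
      refine Set.inter_subset_inter_right _ fun ξ hξ => ?_
      refine Set.Subset.trans (fun η hη => ?_) hξ
      rw [mem_cyl_ofFn] at hη ⊢
      intro i
      exact hη ⟨i, by omega⟩
    have hun : A = ⋃ n, (A ∩ P n) := by
      rw [← Set.inter_iUnion]
      refine (Set.inter_eq_left.2 fun ξ hξ => ?_).symm
      obtain ⟨n, hn⟩ := exists_pre U hU ξ (hAU hξ)
      exact Set.mem_iUnion.2 ⟨n, hn⟩
    rw [hun, hmono.measure_iUnion]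
    refine iSup_le fun n => ?_
    let S : Finset (Fin n → X) := Finset.univ.filter (fun v => cyl (List.ofFn v) ⊆ U)
    calc μ (A ∩ P n) ≤ μ (⋃ v ∈ S, A ∩ cyl (List.ofFn v)) := by
          refine measure_mono fun ξ hξ => ?_
          simp only [Set.mem_iUnion]
          refine ⟨fun i => ξ i, ?_, hξ.1, (mem_cyl_ofFn _ _ _).2 fun _ => rfl⟩
          simp only [S, Finset.mem_filter, Finset.mem_univ, true_and]
          exact hξ.2
      _ ≤ ∑ v ∈ S, μ (A ∩ cyl (List.ofFn v)) := measure_biUnion_finset_le _ _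
      _ ≤ ∑ v ∈ S, d * μ (cyl (List.ofFn v)) := Finset.sum_le_sum fun v _ => hcell _
      _ = d * μ (⋃ v ∈ S, cyl (List.ofFn v)) := by
          rw [← Finset.mul_sum, ← measure_biUnion_finset]
          · intro v _ v' _ hne
            refine Set.disjoint_left.2 fun ξ h1 h2 => hne ?_
            rw [mem_cyl_ofFn] at h1 h2
            funext i
            rw [← h1, h2]
          · intro x _; exact (isOpen_cyl _).measurableSet
      _ ≤ d * μ U := by
          gcongr
          refine Set.iUnion₂_subset fun v hv => ?_
          simpa [S] using hv
  have hle : μ A ≤ d * μ A := by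
    by_cases hd0 : d = 0
    · have := hopen Set.univ isOpen_univ (Set.subset_univ _)
      simpa [hd0] using this
    have hdt : d ≠ ⊤ := hd.ne_top
    rw [mul_comm, ← ENNReal.div_le_iff hd0 hdt]
    conv_rhs => rw [Set.measure_eq_iInf_isOpen A μ]
    refine le_iInf fun U => le_iInf fun hAU => le_iInf fun hU => ?_
    rw [ENNReal.div_le_iff hd0 hdt, mul_comm]
    exact hopen U hU hAU
  have : d * μ A < 1 * μ A := ENNReal.mul_lt_mul_left hA (measure_ne_top μ A) hd
  rw [one_mul] at this
  exact absurd hle (not_le.2 this)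

theorem main_aux (hX : 2 ≤ Fintype.card X) (μ : Measure (ℕ → X))
    (hμ : ∀ w : List X, μ (cyl w) = ((Fintype.card X : ENNReal))⁻¹ ^ w.length)
    (F : Set (ℕ → X)) (hfin : (Set.range (fun u : List X => wcat u ⁻¹' F)).Finite) :
    ∃ q : ℚ, μ F = ENNReal.ofReal (q : ℝ) := by
  have hu : μ Set.univ = 1 := by rw [← cyl_nil, hμ]; simp
  have : IsProbabilityMeasure μ := ⟨hu⟩
  set M : List X → ENNReal := fun u => μ (wcat u ⁻¹' F) with hM
  set m : List X → ℝ := fun u => (M u).toReal with hm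
  have happ : ∀ u v : List X, wcat (u ++ v) ⁻¹' F = wcat v ⁻¹' (wcat u ⁻¹' F) := by
    intro u v; ext ξ; simp [wcat_append]
  have hharm : ∀ u, (Fintype.card X : ℝ) * m u = ∑ x : X, m (u ++ [x]) := by
    intro u
    have h := harmonic _ μ hμ (wcat u ⁻¹' F)
    have h2 : m u = (Fintype.card X : ℝ)⁻¹ * ∑ x : X, m (u ++ [x]) := by
      simp only [hm, hM]
      rw [h, ENNReal.toReal_mul, ENNReal.toReal_sum (fun x _ => measure_ne_top μ _)]
      simp [happ]
    rw [h2, ← mul_assoc, mul_inv_cancel₀, one_mul]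
    have : Fintype.card X ≠ 0 := by omega
    exact_mod_cast this
  have hMfin : (Set.range M).Finite := by
    refine (hfin.image μ).subset ?_
    rintro _ ⟨u, rfl⟩
    exact ⟨_, ⟨u, rfl⟩, rfl⟩
  have hreach : ∀ u, ∃ v, m (u ++ v) = 0 ∨ m (u ++ v) = 1 := by
    intro u
    by_cases h0 : M u = 0
    · exact ⟨[], Or.inl (by simp [hm, h0])⟩
    have hf : (Set.range (fun v => M (u ++ v))).Finite := hMfin.subset (by
      rintro _ ⟨v, rfl⟩; exact ⟨_, rfl⟩)
    obtain ⟨_, ⟨v, rfl⟩, hv⟩ := Set.exists_max_image _ id hf ⟨_, ⟨[], rfl⟩⟩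
    refine ⟨v, Or.inr ?_⟩
    have h1 : M (u ++ v) = 1 := by
      refine le_antisymm prob_le_one (not_lt.1 fun hlt => ?_)
      obtain ⟨w, hw⟩ := density _ μ hμ (wcat u ⁻¹' F) h0 _ hlt
      rw [← happ] at hw
      exact absurd (hv _ ⟨w, rfl⟩) (not_le.2 hw)
    simp [hm, h1]
  obtain ⟨φ, hφ⟩ := LinearMap.exists_leftInverse_of_injective (Algebra.linearMap ℚ ℝ)
    (LinearMap.ker_eq_bot.2 (algebraMap ℚ ℝ).injective)
  have hφ1 : φ 1 = 1 := by
    have := LinearMap.congr_fun hφ 1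
    simpa using this
  set g : List X → ℝ := fun u => m u - (φ (m u) : ℝ) with hg
  have hgh : ∀ u, (Fintype.card X : ℝ) * g u = ∑ x : X, g (u ++ [x]) := by
    intro u
    simp only [hg, mul_sub, Finset.sum_sub_distrib, hharm]
    congr 1
    have h3 : (Fintype.card X : ℚ) * φ (m u) = ∑ x : X, φ (m (u ++ [x])) := by
      rw [← map_sum, ← hharm, ← nsmul_eq_mul, ← nsmul_eq_mul, map_nsmul]
    exact_mod_cast congrArg (fun q : ℚ => (q : ℝ)) h3
  have hgfin : (Set.range g).Finite := by
    refine (hMfin.image (fun e => e.toReal - (φ e.toReal : ℝ))).subset ?_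
    rintro _ ⟨u, rfl⟩
    exact ⟨_, ⟨u, rfl⟩, rfl⟩
  have hgz : ∀ u, ∃ v, g (u ++ v) = 0 := by
    intro u
    obtain ⟨v, hv | hv⟩ := hreach u
    · exact ⟨v, by simp [hg, hv]⟩
    · exact ⟨v, by simp [hg, hv, hφ1]⟩
  have hmax : ∀ k : List X → ℝ, (∀ u, (Fintype.card X : ℝ) * k u = ∑ x : X, k (u ++ [x])) →
      (Set.range k).Finite → (∀ u, ∃ v, k (u ++ v) = 0) → ∀ u, k u ≤ 0 := by
    intro k hk hkf hkz u
    obtain ⟨_, ⟨u0, rfl⟩, h0⟩ := Set.exists_max_image _ id hkf ⟨_, ⟨[], rfl⟩⟩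
    have h0' : ∀ w, k w ≤ k u0 := fun w => h0 _ ⟨w, rfl⟩
    have hall : ∀ v, k (u0 ++ v) = k u0 := by
      intro v
      induction v using List.reverseRecOn with
      | nil => simp
      | append_singleton v x ih =>
        have hs := hk (u0 ++ v)
        have hz : ∑ y : X, (k u0 - k (u0 ++ v ++ [y])) = 0 := by
          rw [Finset.sum_sub_distrib, ← hs, ih]; simp
        have := (Finset.sum_eq_zero_iff_of_nonneg (fun y _ => sub_nonneg.2 (h0' _))).1 hz x
          (Finset.mem_univ x)
        rw [← List.append_assoc]
        linarith
    obtain ⟨v, hv⟩ := hkz u0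
    rw [hall] at hv
    exact (h0' u).trans hv.le
  have hg0 : g [] = 0 := by
    refine le_antisymm (hmax g hgh hgfin hgz []) ?_
    have := hmax (fun u => - g u) (fun u => by simp [hgh])
      ((hgfin.image (fun t => -t)).subset (by rintro _ ⟨u, rfl⟩; exact ⟨_, ⟨u, rfl⟩, rfl⟩))
      (fun u => by obtain ⟨v, hv⟩ := hgz u; exact ⟨v, by simp [hv]⟩) []
    linarith
  refine ⟨φ (m []), ?_⟩
  have : ((φ (m []) : ℚ) : ℝ) = m [] := by simp only [hg] at hg0; linarith
  rw [this]
  simp only [hm, hM]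
  rw [ENNReal.ofReal_toReal (measure_ne_top μ _)]
  rfl

end Meas

theorem stmt16 {X : Type} [Fintype X] (hX : 2 ≤ Fintype.card X)
    (μ : @MeasureTheory.Measure (ℕ → X) (cantorBorel X))
    (hμ : ∀ w : List X, μ (cyl w) = ((Fintype.card X : ENNReal))⁻¹ ^ w.length)
    (F : Set (ℕ → X)) (hreg : IsRegOmega F) :
    ∃ q : ℚ, μ F = ENNReal.ofReal (q : ℝ) := by
  letI : TopologicalSpace X := ⊥
  haveI : DiscreteTopology X := ⟨rfl⟩
  letI : MeasurableSpace (ℕ → X) := cantorBorel X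
  haveI : BorelSpace (ℕ → X) := ⟨rfl⟩
  exact main_aux hX μ hμ F (fin_omega F hreg)

end AutoBaire
end

section
/- Let X = {a, b} be a two-letter alphabet and V₃ ⊆ {a,b}* be the least language satisfying V₃ = {a} ∪ {b}·V₃·V₃·V₃. Then σ(V₃) := Σ_{w∈V₃} 2^{−|w|} equals (√5 − 1)/2, i.e., σ(V₃) is the minimal positive solution of the equation t = (1 + t³)/2, and this value is irrational. -/
open Set MeasureTheory Computability

namespace AutoBaire

variable {X : Type}

/-- The fixed-point equation `V = {a} ∪ {b}·V·V·V`. -/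
def V3Eq (a b : X) (V : Language X) : Prop :=
  ∀ u : List X, u ∈ V ↔
    (u = [a] ∨ ∃ v₁ ∈ V, ∃ v₂ ∈ V, ∃ v₃ ∈ V, u = [b] ++ v₁ ++ v₂ ++ v₃)

theorem V3_prefix {V : Language Bool} (h : V3Eq false true V) (n : ℕ) :
    ∀ u v x y : List Bool, u.length ≤ n → u ∈ V → v ∈ V → u ++ x = v ++ y → u = v ∧ x = y := by
  induction n with
  | zero =>
    intro u v x y hl hu
    rcases (h u).1 hu with rfl | ⟨a, _, b, _, c, _, rfl⟩ <;> simp at hl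
  | succ n ih =>
    intro u v x y hl hu hv he
    rcases (h u).1 hu with rfl | ⟨a, ha, b, hb, c, hc, rfl⟩ <;>
    rcases (h v).1 hv with rfl | ⟨a', ha', b', hb', c', hc', rfl⟩
    · simpa using he
    · simp at he
    · simp at he
    · simp only [List.append_assoc, List.cons_append, List.nil_append, List.cons.injEq,
        true_and] at he
      simp only [List.length_append, List.length_cons, List.length_nil] at hl
      obtain ⟨rfl, he1⟩ := ih _ _ _ _ (by omega) ha ha' he
      obtain ⟨rfl, he2⟩ := ih _ _ _ _ (by omega) hb hb' he1
      obtain ⟨rfl, he3⟩ := ih _ _ _ _ (by omega) hc hc' he2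
      exact ⟨rfl, he3⟩

def V3map {V : Language Bool} (h : V3Eq false true V) :
    Option ({u : List Bool // u ∈ V} × {u : List Bool // u ∈ V} × {u : List Bool // u ∈ V}) →
      {u : List Bool // u ∈ V}
  | none => ⟨[false], (h _).2 (Or.inl rfl)⟩
  | some (p, q, r) => ⟨[true] ++ p.1 ++ q.1 ++ r.1,
      (h _).2 (Or.inr ⟨p.1, p.2, q.1, q.2, r.1, r.2, rfl⟩)⟩

theorem V3map_bij {V : Language Bool} (h : V3Eq false true V) :
    Function.Bijective (V3map h) := by
  constructor
  · rintro (_ | ⟨⟨a, ha⟩, ⟨b, hb⟩, ⟨c, hc⟩⟩) (_ | ⟨⟨a', ha'⟩, ⟨b', hb'⟩, ⟨c', hc'⟩⟩) he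
    · rfl
    · simp [V3map] at he
    · simp [V3map] at he
    · simp only [V3map, Subtype.mk.injEq, List.append_assoc, List.cons_append, List.nil_append,
        List.cons.injEq, true_and] at he
      obtain ⟨rfl, he1⟩ := V3_prefix h _ _ _ _ _ le_rfl ha ha' he
      obtain ⟨rfl, he2⟩ := V3_prefix h _ _ _ _ _ le_rfl hb hb' he1
      subst he2
      rfl
  · rintro ⟨u, hu⟩
    rcases (h u).1 hu with rfl | ⟨a, ha, b, hb, c, hc, rfl⟩
    · exact ⟨none, rfl⟩
    · exact ⟨some (⟨a, ha⟩, ⟨b, hb⟩, ⟨c, hc⟩), rfl⟩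

theorem V3_tsum {V : Language Bool} (h : V3Eq false true V)
    (f : {u : List Bool // u ∈ V} → ENNReal) :
    ∑' w, f w = f (V3map h none) + ∑' p, f (V3map h (some p)) := by
  rw [← (Equiv.ofBijective _ (V3map_bij h)).tsum_eq f]
  rw [← (Equiv.optionEquivSumPUnit.{0, 0} _).symm.tsum_eq]
  rw [Summable.tsum_sum ENNReal.summable ENNReal.summable, add_comm]
  simp

theorem tsum_cube {α : Type} (g : α → ENNReal) :
    ∑' p : α × α × α, 2⁻¹ * (g p.1 * (g p.2.1 * g p.2.2)) = 2⁻¹ * (∑' a, g a) ^ 3 := by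
  rw [ENNReal.tsum_mul_left, ENNReal.tsum_prod']
  simp only [ENNReal.tsum_mul_left]
  rw [ENNReal.tsum_mul_right, ENNReal.tsum_prod']
  simp only [ENNReal.tsum_mul_left]
  rw [ENNReal.tsum_mul_right]
  ring

theorem V3_fix {V : Language Bool} (h : V3Eq false true V) :
    ∑' w : {u : List Bool // u ∈ V}, (2⁻¹ : ENNReal) ^ w.1.length =
      2⁻¹ + 2⁻¹ * (∑' w : {u : List Bool // u ∈ V}, (2⁻¹ : ENNReal) ^ w.1.length) ^ 3 := by
  rw [← tsum_cube]
  conv_lhs => rw [V3_tsum h]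
  congr 1
  · simp [V3map]
  · refine tsum_congr fun p => ?_
    simp only [V3map, List.length_append, List.length_cons, List.length_nil, pow_add]
    ring

theorem V3_trunc {V : Language Bool} (h : V3Eq false true V) (c : ENNReal)
    (hc : 2⁻¹ + 2⁻¹ * c ^ 3 ≤ c) (n : ℕ) :
    ∑' w : {u : List Bool // u ∈ V}, (if w.1.length ≤ n then (2⁻¹ : ENNReal) ^ w.1.length else 0)
      ≤ c := by
  induction n with
  | zero =>
    rw [ENNReal.tsum_eq_zero.2]
    · exact zero_le
    · rintro ⟨u, hu⟩
      rcases (h u).1 hu with rfl | ⟨a, ha, b, hb, c, hc, rfl⟩ <;> simp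
  | succ n ih =>
    refine le_trans ?_ hc
    refine le_trans ?_ (add_le_add le_rfl (mul_le_mul_right (pow_le_pow_left' ih 3) _))
    rw [← tsum_cube, V3_tsum h]
    refine add_le_add ?_ (ENNReal.tsum_le_tsum fun p => ?_)
    · simp [V3map]
    · obtain ⟨⟨x, hx⟩, ⟨y, hy⟩, ⟨z, hz⟩⟩ := p
      simp only [V3map, List.length_append, List.length_cons, List.length_nil]
      by_cases h0 : 0 + 1 + x.length + y.length + z.length ≤ n + 1
      · rw [if_pos h0, if_pos (by omega), if_pos (by omega), if_pos (by omega)]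
        apply le_of_eq
        simp only [pow_add]
        ring
      · rw [if_neg h0]
        exact zero_le

theorem V3_le {V : Language Bool} (h : V3Eq false true V) (c : ENNReal)
    (hc : 2⁻¹ + 2⁻¹ * c ^ 3 ≤ c) :
    ∑' w : {u : List Bool // u ∈ V}, (2⁻¹ : ENNReal) ^ w.1.length ≤ c := by
  rw [ENNReal.tsum_eq_iSup_sum]
  refine iSup_le fun s => ?_
  refine le_trans ?_ (V3_trunc h c hc (s.sup fun w => w.1.length))
  refine le_trans (Finset.sum_le_sum fun w hw => ?_) (ENNReal.sum_le_tsum s)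
  rw [if_pos (Finset.le_sup (f := fun w : {u : List Bool // u ∈ V} => w.1.length) hw)]

theorem stmt17 (V₃ : Language Bool)
    (hfix : V3Eq false true V₃)
    (hleast : ∀ W : Language Bool, V3Eq false true W → ∀ u, u ∈ V₃ → u ∈ W) :
    (∑' w : {u : List Bool // u ∈ V₃}, ((2 : ℝ)⁻¹) ^ (w : List Bool).length)
        = (Real.sqrt 5 - 1) / 2 ∧
    ((Real.sqrt 5 - 1) / 2 = (1 + ((Real.sqrt 5 - 1) / 2) ^ 3) / 2 ∧
      ∀ t : ℝ, 0 < t → t = (1 + t ^ 3) / 2 → (Real.sqrt 5 - 1) / 2 ≤ t) ∧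
    Irrational ((Real.sqrt 5 - 1) / 2) := by
  have h5 : Real.sqrt 5 ^ 2 = 5 := Real.sq_sqrt (by norm_num)
  have h2 : 2 < Real.sqrt 5 := Real.lt_sqrt_of_sq_lt (by norm_num)
  have h3 : Real.sqrt 5 < 3 := by nlinarith
  have hφ : (Real.sqrt 5 - 1) / 2 = (1 + ((Real.sqrt 5 - 1) / 2) ^ 3) / 2 := by
    nlinarith [h5, congrArg (· * Real.sqrt 5) h5]
  have key : ∀ t : ℝ, 0 ≤ t → t = (1 + t ^ 3) / 2 → t = 1 ∨ t = (Real.sqrt 5 - 1) / 2 := by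
    intro t ht he
    have : (t - 1) * ((t - (Real.sqrt 5 - 1) / 2) * (t + (Real.sqrt 5 + 1) / 2)) = 0 := by
      linear_combination (-2) * he - (t - 1) / 4 * h5
    rcases mul_eq_zero.1 this with h | h
    · left; linarith
    · rcases mul_eq_zero.1 h with h | h
      · right; linarith
      · exfalso; linarith
  refine ⟨?_, ⟨hφ, ?_⟩, ?_⟩
  · have hle := V3_le hfix (ENNReal.ofReal ((Real.sqrt 5 - 1) / 2)) (by
      have e : (2⁻¹ : ENNReal) = ENNReal.ofReal 2⁻¹ := by
        rw [ENNReal.ofReal_inv_of_pos (by norm_num)]; simp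
      have p0 : 0 ≤ (Real.sqrt 5 - 1) / 2 := by linarith
      rw [e, ← ENNReal.ofReal_pow p0, ← ENNReal.ofReal_mul (by norm_num),
        ← ENNReal.ofReal_add (by norm_num) (by positivity)]
      apply ENNReal.ofReal_le_ofReal
      linarith)
    have hf := V3_fix hfix
    have hr : (∑' w : {u : List Bool // u ∈ V₃}, ((2 : ℝ)⁻¹) ^ (w : List Bool).length)
        = (∑' w : {u : List Bool // u ∈ V₃}, (2⁻¹ : ENNReal) ^ w.1.length).toReal := by
      rw [ENNReal.tsum_toReal_eq (fun w => by simp)]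
      simp
    rw [hr]
    generalize (∑' w : {u : List Bool // u ∈ V₃}, (2⁻¹ : ENNReal) ^ w.1.length) = S at hle hf
    have hS : S ≠ ⊤ := ne_top_of_le_ne_top ENNReal.ofReal_ne_top hle
    have hle' := ENNReal.toReal_le_of_le_ofReal (by linarith) hle
    have hf' := congrArg ENNReal.toReal hf
    rw [ENNReal.toReal_add (by simp) (ENNReal.mul_ne_top (by simp) (ENNReal.pow_ne_top hS))] at hf'
    simp only [ENNReal.toReal_mul, ENNReal.toReal_pow, ENNReal.toReal_inv,
      ENNReal.toReal_ofNat] at hf'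
    rcases key S.toReal ENNReal.toReal_nonneg (by linarith) with h | h
    · exfalso; linarith
    · exact h
  · intro t ht he
    rcases key t ht.le he with h | h <;> linarith
  · have hi : Irrational (Real.sqrt 5) := by
      simpa using Nat.Prime.irrational_sqrt (p := 5) (by norm_num)
    have := (hi.sub_ratCast 1).div_ratCast (q := 2) (by norm_num)
    simpa using this

end AutoBaire
end
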